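/- arXiv:1404.3327 — 2 statements merged into one kernel-verified Lean document; each statement's English description precedes it below -/
import Mathlib

section
/- Let ι be a nonempty finite index type, A : Matrix ι ι ℝ an entrywise nonnegative matrix, σ s : ℝ, and w : ι → ℝ a σ-suitable vector for A. Assume s > σ, let μ = max over k of (σ - A k k)/(s - A k k) and r = |1 - ω| + ω·μ, and suppose 0 < ω < 2/(1 + μ). If x̄ : ι → ℝ satisfies (s • 1 - A).mulVec x̄ = b, and x' is obtained from x : ι → ℝ by a step-asynchronous SOR update for the system (s • 1 - A) x = b with relaxation parameter ω, then ‖x̄ - x'‖_w ≤ (r/(1-r)) · ‖x' - x‖_w. -/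
open Finset

/-- The `w`-norm of a vector `x`: the maximum over `i` of `|x i| / w i`. -/
noncomputable def wNorm {ι : Type*} [Fintype ι] [Nonempty ι] (w x : ι → ℝ) : ℝ :=
  Finset.univ.sup' Finset.univ_nonempty (fun i => |x i| / w i)

/-!
Write `M = s • 1 - A`. Suitability of `w` bounds the `w`-weighted off-diagonal part of row `i` of
`M` by `μ * M i i * w i`. Since `xbar` is a fixed point of the SOR step, the new error at `i` is
`1 - ω` times the old error at `i` plus `ω / M i i` times a combination of the errors of the values
that were read. If these are all at most `E` in the `w`-norm, the new error at `i` is at most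
`r * E * w i`. As `r < 1`, reading an already updated value is no worse than reading an old one, so
induction along the order of updates gives a contraction by `r`, and the triangle inequality turns
it into the a posteriori bound.
-/

section WNorm

variable {ι : Type*} [Fintype ι] [Nonempty ι] {w x xbar x' : ι → ℝ} {r C : ℝ}

theorem wNorm_le_iff (hw : ∀ i, 0 < w i) : wNorm w x ≤ C ↔ ∀ i, |x i| ≤ C * w i := by
  simp only [wNorm, sup'_le_iff, mem_univ, true_imp_iff, div_le_iff₀ (hw _)]

theorem abs_le_wNorm_mul (hw : ∀ i, 0 < w i) (x : ι → ℝ) (i : ι) : |x i| ≤ wNorm w x * w i :=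
  (wNorm_le_iff hw).1 le_rfl i

theorem wNorm_nonneg (hw : ∀ i, 0 < w i) : 0 ≤ wNorm w x :=
  let i := Classical.arbitrary ι
  nonneg_of_mul_nonneg_left ((abs_nonneg (x i)).trans (abs_le_wNorm_mul hw x i)) (hw i)

theorem wNorm_sub_le (hw : ∀ i, 0 < w i) (x y z : ι → ℝ) :
    wNorm w (x - z) ≤ wNorm w (x - y) + wNorm w (y - z) := by
  refine (wNorm_le_iff hw).2 fun i => ?_
  calc |x i - z i| ≤ |x i - y i| + |y i - z i| := abs_sub_le _ _ _
    _ ≤ wNorm w (x - y) * w i + wNorm w (y - z) * w i :=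
        add_le_add (abs_le_wNorm_mul hw (x - y) i) (abs_le_wNorm_mul hw (y - z) i)
    _ = (wNorm w (x - y) + wNorm w (y - z)) * w i := (add_mul _ _ _).symm

theorem wNorm_sub_le_div_mul_of_contraction (hw : ∀ i, 0 < w i) (hr0 : 0 ≤ r) (hr1 : r < 1)
    (h : wNorm w (xbar - x') ≤ r * wNorm w (xbar - x)) :
    wNorm w (xbar - x') ≤ r / (1 - r) * wNorm w (x' - x) := by
  rw [div_mul_eq_mul_div, le_div_iff₀ (sub_pos.2 hr1)]
  have htriangle : r * wNorm w (xbar - x) ≤ r * (wNorm w (xbar - x') + wNorm w (x' - x)) :=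
    mul_le_mul_of_nonneg_left (wNorm_sub_le hw xbar x' x) hr0
  linarith

end WNorm

theorem abs_one_sub_add_mul_lt_one {ω θ : ℝ} (hω0 : 0 < ω) (hω2 : ω < 2 / (1 + θ))
    (hθ : -1 < θ) (hθ1 : θ < 1) : |1 - ω| + ω * θ < 1 := by
  rw [lt_div_iff₀ (by linarith)] at hω2
  rw [← lt_sub_iff_add_lt, abs_lt]
  constructor <;> nlinarith

section DiagDominant

variable {ι : Type*} [Fintype ι] [DecidableEq ι]

/-- Diagonal dominance of the rows of `M`, with ratio `θ`, after scaling column `j` by `w j`.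
The diagonal is required to be nonzero, so that the SOR iteration for `M` makes sense. -/
structure IsScaledDiagDominant (M : Matrix ι ι ℝ) (w : ι → ℝ) (θ : ℝ) : Prop where
  diag_ne_zero : ∀ i, M i i ≠ 0
  sum_offDiag_le : ∀ i, ∑ j ∈ univ.erase i, |M i j| * w j ≤ θ * (|M i i| * w i)

theorem IsScaledDiagDominant.ratio_nonneg [Nonempty ι] {M : Matrix ι ι ℝ} {w : ι → ℝ} {θ : ℝ}
    (hM : IsScaledDiagDominant M w θ) (hw : ∀ i, 0 < w i) : 0 ≤ θ :=
  let i := Classical.arbitrary ι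
  have hsum : 0 ≤ ∑ j ∈ univ.erase i, |M i j| * w j :=
    sum_nonneg fun j _ => mul_nonneg (abs_nonneg _) (hw j).le
  nonneg_of_mul_nonneg_left (hsum.trans (hM.sum_offDiag_le i))
    (mul_pos (abs_pos.2 (hM.diag_ne_zero i)) (hw i))

theorem mulVec_apply_eq_diag_add (M : Matrix ι ι ℝ) (x : ι → ℝ) (i : ι) :
    M.mulVec x i = M i i * x i + ∑ j ∈ univ.erase i, M i j * x j :=
  (add_sum_erase univ (fun j => M i j * x j) (mem_univ i)).symm

end DiagDominant

section Suitable

variable {ι : Type*} [Fintype ι] {A : Matrix ι ι ℝ} {σ s : ℝ} {w : ι → ℝ}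

/-- `w` is `σ`-suitable for `A`: a positive vector with `A w ≤ σ w` entrywise. -/
structure IsSuitable (A : Matrix ι ι ℝ) (σ : ℝ) (w : ι → ℝ) : Prop where
  pos : ∀ i, 0 < w i
  mulVec_le : ∀ i, A.mulVec w i ≤ σ * w i

namespace IsSuitable

theorem sum_offDiag_le [DecidableEq ι] (h : IsSuitable A σ w) (i : ι) :
    ∑ j ∈ univ.erase i, A i j * w j ≤ (σ - A i i) * w i := by
  linarith [mulVec_apply_eq_diag_add A w i, h.mulVec_le i]

theorem diag_le (h : IsSuitable A σ w) (hA : ∀ i j, i ≠ j → 0 ≤ A i j) (i : ι) :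
    A i i ≤ σ := by
  classical
  have hsum : 0 ≤ ∑ j ∈ univ.erase i, A i j * w j :=
    sum_nonneg fun j hj => mul_nonneg (hA i j (ne_of_mem_erase hj).symm) (h.pos j).le
  exact sub_nonneg.1 (nonneg_of_mul_nonneg_left (hsum.trans (h.sum_offDiag_le i)) (h.pos i))

theorem sup'_ratio_lt_one [Nonempty ι] (h : IsSuitable A σ w)
    (hA : ∀ i j, i ≠ j → 0 ≤ A i j) (hs : σ < s) :
    univ.sup' univ_nonempty (fun k => (σ - A k k) / (s - A k k)) < 1 := by
  refine (sup'_lt_iff _).2 fun i _ => ?_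
  rw [div_lt_one (sub_pos.2 ((h.diag_le hA i).trans_lt hs))]
  exact sub_lt_sub_right hs _

theorem isScaledDiagDominant_smul_one_sub [Nonempty ι] [DecidableEq ι] (h : IsSuitable A σ w)
    (hA : ∀ i j, i ≠ j → 0 ≤ A i j) (hs : σ < s) :
    IsScaledDiagDominant (s • (1 : Matrix ι ι ℝ) - A) w
      (univ.sup' univ_nonempty fun k => (σ - A k k) / (s - A k k)) := by
  set μ := univ.sup' univ_nonempty fun k => (σ - A k k) / (s - A k k)
  have hdiag (i : ι) : (s • (1 : Matrix ι ι ℝ) - A) i i = s - A i i := by simp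
  have hoff (i j : ι) (hij : i ≠ j) : |(s • (1 : Matrix ι ι ℝ) - A) i j| = A i j := by
    simp [hij, abs_of_nonneg (hA i j hij)]
  have hpos (i : ι) : 0 < s - A i i := sub_pos.2 ((h.diag_le hA i).trans_lt hs)
  have hratio (i : ι) : σ - A i i ≤ μ * (s - A i i) :=
    (div_le_iff₀ (hpos i)).1 (le_sup' (fun k => (σ - A k k) / (s - A k k)) (mem_univ i))
  refine ⟨fun i => (hdiag i).symm ▸ (hpos i).ne', fun i => ?_⟩
  calc ∑ j ∈ univ.erase i, |(s • (1 : Matrix ι ι ℝ) - A) i j| * w j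
      = ∑ j ∈ univ.erase i, A i j * w j :=
        sum_congr rfl fun j hj => by rw [hoff i j (ne_of_mem_erase hj).symm]
    _ ≤ (σ - A i i) * w i := h.sum_offDiag_le i
    _ ≤ μ * (s - A i i) * w i := mul_le_mul_of_nonneg_right (hratio i) (h.pos i).le
    _ = μ * (|(s • (1 : Matrix ι ι ℝ) - A) i i| * w i) := by
        rw [hdiag, abs_of_pos (hpos i), mul_assoc]

end IsSuitable

end Suitable

section SOR

variable {ι : Type*} [Fintype ι] [DecidableEq ι]
  {M : Matrix ι ι ℝ} {w b xbar x x' z : ι → ℝ} {ω θ : ℝ}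

/-- The `i`-th coordinate of an SOR step for `M x = b` with relaxation parameter `ω`. The old value
at `i` is taken from `x` and the values at the other coordinates from `z`, which thus says which of
them have already been updated. -/
noncomputable def sorStep (M : Matrix ι ι ℝ) (b : ι → ℝ) (ω : ℝ) (x z : ι → ℝ) (i : ι) : ℝ :=
  (1 - ω) * x i + ω / M i i * (b i - ∑ j ∈ univ.erase i, M i j * z j)

theorem sorStep_smul_one_sub_piecewise (A : Matrix ι ι ℝ) (s ω : ℝ) (b x x' : ι → ℝ)
    {N : Finset ι} {i : ι} (hi : i ∉ N) :
    sorStep (s • (1 : Matrix ι ι ℝ) - A) b ω x (N.piecewise x' x) i =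
      (1 - ω) * x i + (ω / (s - A i i)) *
        (b i + ∑ j ∈ N, A i j * x' j
             + ∑ j ∈ univ.filter (fun j => j ∉ N ∧ j ≠ i), A i j * x j) := by
  have hdiag : (s • (1 : Matrix ι ι ℝ) - A) i i = s - A i i := by simp
  have hnew : univ.erase i ∩ N = N := by grind
  have hold : univ.erase i \ N = univ.filter (fun j => j ∉ N ∧ j ≠ i) := by grind
  have hsum : ∑ j ∈ univ.erase i, (s • (1 : Matrix ι ι ℝ) - A) i j * N.piecewise x' x j =
      -(∑ j ∈ N, A i j * x' j + ∑ j ∈ univ.filter (fun j => j ∉ N ∧ j ≠ i), A i j * x j) := by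
    calc ∑ j ∈ univ.erase i, (s • (1 : Matrix ι ι ℝ) - A) i j * N.piecewise x' x j
        = ∑ j ∈ univ.erase i,
            -N.piecewise (fun j => A i j * x' j) (fun j => A i j * x j) j := by
          refine sum_congr rfl fun j hj => ?_
          by_cases hjN : j ∈ N <;> simp [hjN, (ne_of_mem_erase hj).symm]
      _ = _ := by rw [sum_neg_distrib, sum_piecewise, hnew, hold]
  rw [sorStep, hdiag, hsum, sub_neg_eq_add, add_assoc (b i)]

theorem sub_sorStep_eq {i : ι} (hi : M i i ≠ 0) (hxbar : M.mulVec xbar = b) :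
    xbar i - sorStep M b ω x z i =
      (1 - ω) * (xbar i - x i) - ω / M i i * ∑ j ∈ univ.erase i, M i j * (xbar j - z j) := by
  have hb := mulVec_apply_eq_diag_add M xbar i
  rw [hxbar] at hb
  simp only [sorStep, hb, mul_sub, sum_sub_distrib]
  field_simp
  ring

theorem abs_sub_sorStep_le (hM : IsScaledDiagDominant M w θ) (hxbar : M.mulVec xbar = b)
    {E : ℝ} (hE : 0 ≤ E) {i : ι} (hx : |xbar i - x i| ≤ E * w i)
    (hz : ∀ j, j ≠ i → |xbar j - z j| ≤ E * w j) :
    |xbar i - sorStep M b ω x z i| ≤ (|1 - ω| + |ω| * θ) * E * w i := by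
  have hread : |∑ j ∈ univ.erase i, M i j * (xbar j - z j)| ≤ E * (θ * (|M i i| * w i)) :=
    calc |∑ j ∈ univ.erase i, M i j * (xbar j - z j)|
        ≤ ∑ j ∈ univ.erase i, |M i j| * |xbar j - z j| := by
          simpa only [abs_mul] using
            abs_sum_le_sum_abs (fun j => M i j * (xbar j - z j)) (univ.erase i)
      _ ≤ ∑ j ∈ univ.erase i, |M i j| * (E * w j) := by
          gcongr with j hj
          exact hz j (ne_of_mem_erase hj)
      _ = E * ∑ j ∈ univ.erase i, |M i j| * w j := by
          simp only [mul_sum, mul_left_comm]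
      _ ≤ E * (θ * (|M i i| * w i)) := mul_le_mul_of_nonneg_left (hM.sum_offDiag_le i) hE
  have hMi : |M i i| ≠ 0 := abs_ne_zero.2 (hM.diag_ne_zero i)
  rw [sub_sorStep_eq (hM.diag_ne_zero i) hxbar]
  calc |(1 - ω) * (xbar i - x i) - ω / M i i * ∑ j ∈ univ.erase i, M i j * (xbar j - z j)|
      ≤ |1 - ω| * |xbar i - x i|
          + |ω| / |M i i| * |∑ j ∈ univ.erase i, M i j * (xbar j - z j)| := by
        simpa only [abs_mul, abs_div] using abs_sub ((1 - ω) * (xbar i - x i))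
          (ω / M i i * ∑ j ∈ univ.erase i, M i j * (xbar j - z j))
    _ ≤ |1 - ω| * (E * w i) + |ω| / |M i i| * (E * (θ * (|M i i| * w i))) := by gcongr
    _ = (|1 - ω| + |ω| * θ) * E * w i := by field_simp

theorem wNorm_sub_le_mul_of_stepAsyncSOR [Nonempty ι] (hw : ∀ i, 0 < w i)
    (hM : IsScaledDiagDominant M w θ) (hω : |1 - ω| + |ω| * θ ≤ 1) (hxbar : M.mulVec xbar = b)
    {N : ι → Finset ι} (hN : WellFounded fun j i => j ∈ N i)
    (hupd : ∀ i, x' i = sorStep M b ω x ((N i).piecewise x' x) i) :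
    wNorm w (xbar - x') ≤ (|1 - ω| + |ω| * θ) * wNorm w (xbar - x) := by
  have hE : 0 ≤ wNorm w (xbar - x) := wNorm_nonneg hw
  have hold (j : ι) : |xbar j - x j| ≤ wNorm w (xbar - x) * w j :=
    abs_le_wNorm_mul hw (xbar - x) j
  refine (wNorm_le_iff hw).2 fun i => ?_
  induction i using hN.induction with
  | _ i ih =>
    rw [Pi.sub_apply, hupd i]
    refine abs_sub_sorStep_le hM hxbar hE (hold i) fun j _ => ?_
    by_cases hj : j ∈ N i
    · rw [piecewise_eq_of_mem _ _ _ hj]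
      exact (ih j hj).trans
        (mul_le_mul_of_nonneg_right (mul_le_of_le_one_left hE hω) (hw j).le)
    · rw [piecewise_eq_of_notMem _ _ _ hj]
      exact hold j

theorem stepAsyncSOR_aposteriori_bound_general [Nonempty ι] (hw : ∀ i, 0 < w i)
    (hM : IsScaledDiagDominant M w θ) (hθ : θ < 1) {r : ℝ} (hr : r = |1 - ω| + ω * θ)
    (hω0 : 0 < ω) (hω2 : ω < 2 / (1 + θ)) (hxbar : M.mulVec xbar = b)
    {N : ι → Finset ι} (hN : WellFounded fun j i => j ∈ N i)
    (hupd : ∀ i, x' i = sorStep M b ω x ((N i).piecewise x' x) i) :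
    wNorm w (xbar - x') ≤ r / (1 - r) * wNorm w (x' - x) := by
  have hθ0 : 0 ≤ θ := hM.ratio_nonneg hw
  have hr0 : 0 ≤ r := by rw [hr]; positivity
  have hr1 : r < 1 := hr ▸ abs_one_sub_add_mul_lt_one hω0 hω2 (by linarith) hθ
  have hr_abs : r = |1 - ω| + |ω| * θ := by rw [hr, abs_of_pos hω0]
  refine wNorm_sub_le_div_mul_of_contraction hw hr0 hr1 ?_
  rw [hr_abs] at hr1 ⊢
  exact wNorm_sub_le_mul_of_stepAsyncSOR hw hM hr1.le hxbar hN hupd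

end SOR

theorem stepAsyncSOR_aposteriori_bound
    {ι : Type*} [Fintype ι] [Nonempty ι] [DecidableEq ι]
    (A : Matrix ι ι ℝ) (σ s ω : ℝ) (w b xbar x x' : ι → ℝ)
    (hA : ∀ i j, 0 ≤ A i j)
    (hw : ∀ i, 0 < w i)
    (hsuit : ∀ i, A.mulVec w i ≤ σ * w i)
    (hs : σ < s)
    (μ r : ℝ)
    (hμ : μ = Finset.univ.sup' Finset.univ_nonempty (fun k => (σ - A k k) / (s - A k k)))
    (hr : r = |1 - ω| + ω * μ)
    (hω0 : 0 < ω) (hω2 : ω < 2 / (1 + μ))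
    (hxbar : (s • (1 : Matrix ι ι ℝ) - A).mulVec xbar = b)
    (N : ι → Finset ι) (rnk : ι → ℕ)
    (hrank : ∀ i j, j ∈ N i → rnk j < rnk i)
    (hupd : ∀ i, x' i = (1 - ω) * x i + (ω / (s - A i i)) *
      (b i + ∑ j ∈ N i, A i j * x' j
           + ∑ j ∈ Finset.univ.filter (fun j => j ∉ N i ∧ j ≠ i), A i j * x j)) :
    wNorm w (xbar - x') ≤ (r / (1 - r)) * wNorm w (x' - x) := by
  have hsuitable : IsSuitable A σ w := ⟨hw, hsuit⟩
  have hoff : ∀ i j, i ≠ j → 0 ≤ A i j := fun i j _ => hA i j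
  subst hμ
  exact stepAsyncSOR_aposteriori_bound_general hw
    (hsuitable.isScaledDiagDominant_smul_one_sub hoff hs) (hsuitable.sup'_ratio_lt_one hoff hs)
    hr hω0 hω2 hxbar (Subrelation.wf (hrank _ _) (measure rnk).wf) fun i =>
      (hupd i).trans (sorStep_smul_one_sub_piecewise A s ω b x x'
        fun hi => (hrank i i hi).false).symm
end

section
/- Let ι be a nonempty finite index type, A : Matrix ι ι ℝ an entrywise nonnegative matrix, and σ : ℝ with σ > ρ(A). For k : ℕ let w^(k) := Σ_{i=0}^{k} σ^{-i} · (A^i).mulVec 𝟙 (where 𝟙 is the all-ones vector). Then there exists k such that (A.mulVec w^(k)) i ≤ σ * w^(k) i for all i; since also w^(k) i > 0 for all i, the finite partial sum w^(k) is σ-suitable for A. -/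
open Finset

/-- Spectral radius of a real matrix: the maximum of the absolute values of
its complex eigenvalues. -/
noncomputable def specRad {ι : Type*} [Fintype ι] [DecidableEq ι] (A : Matrix ι ι ℝ) : ℝ :=
  sSup ((fun z : ℂ => ‖z‖) '' spectrum ℂ (A.map (algebraMap ℝ ℂ)))

/-!
Put `B = σ⁻¹ A`, so that `ρ(B) < 1` and `w = (1 + B + ⋯ + B^k) 𝟙`. Telescoping gives
`B w - w = B^(k+1) 𝟙 - 𝟙`, hence `A w ≤ σ w` if and only if `B^(k+1) 𝟙 ≤ 𝟙`. By Gelfand's formula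
`B^n → 0`, so the latter holds for all large `k`, and with any positive vector in place of `𝟙`.
-/

open Filter Matrix
open scoped Pointwise Topology

theorem isTopologicallyNilpotent_of_spectralRadius_lt_one {R : Type*} [NormedRing R]
    [NormedAlgebra ℂ R] [CompleteSpace R] {a : R} (ha : spectralRadius ℂ a < 1) :
    IsTopologicallyNilpotent a := by
  obtain ⟨r, har, hr⟩ := ENNReal.lt_iff_exists_nnreal_btwn.mp ha
  have norm_pow_le : ∀ᶠ n : ℕ in atTop, ‖a ^ n‖ ≤ (r : ℝ) ^ n := by
    filter_upwards [(spectrum.gelfand_formula a).eventually_lt_const har,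
      eventually_gt_atTop 0] with n hn hn_pos
    rw [one_div, ENNReal.rpow_inv_lt_iff (by positivity), ENNReal.rpow_natCast] at hn
    exact_mod_cast hn.le
  exact squeeze_zero_norm' norm_pow_le
    (tendsto_pow_atTop_nhds_zero_of_lt_one r.coe_nonneg (by exact_mod_cast hr))

section PartialSums

variable {ι : Type*} [Fintype ι]

/-- `w` is `σ`-suitable for `A`: an entrywise positive vector that `A` expands by a factor of at
most `σ` in each coordinate. -/
structure IsSuitable_s7 (A : Matrix ι ι ℝ) (σ : ℝ) (w : ι → ℝ) : Prop where
  pos : ∀ i, 0 < w i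
  mulVec_le : ∀ i, (A *ᵥ w) i ≤ σ * w i

theorem inv_smul_mulVec_le_iff {K : Type*} [Field K] [LinearOrder K] [IsStrictOrderedRing K]
    {A : Matrix ι ι K} {c : K} {w : ι → K} (hc : 0 < c) :
    (c⁻¹ • A) *ᵥ w ≤ w ↔ ∀ i, (A *ᵥ w) i ≤ c * w i := by
  simp only [smul_mulVec, Pi.le_def, Pi.smul_apply, smul_eq_mul, inv_mul_le_iff₀ hc]

variable [DecidableEq ι]

theorem specRad_nonneg (A : Matrix ι ι ℝ) : 0 ≤ specRad A :=
  Real.sSup_nonneg (Set.forall_mem_image.mpr fun z _ => norm_nonneg z)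

theorem norm_le_specRad {A : Matrix ι ι ℝ} {z : ℂ}
    (hz : z ∈ spectrum ℂ (A.map (algebraMap ℝ ℂ))) : ‖z‖ ≤ specRad A :=
  le_csSup ((Matrix.finite_spectrum _).image _).bddAbove (Set.mem_image_of_mem _ hz)

theorem specRad_smul {c : ℝ} (hc : c ≠ 0) (A : Matrix ι ι ℝ) :
    specRad (c • A) = |c| * specRad A := by
  have map_smul : (c • A).map (algebraMap ℝ ℂ) =
      Units.mk0 (c : ℂ) (by exact_mod_cast hc) • A.map (algebraMap ℝ ℂ) := by
    ext i j
    simp [Units.smul_def]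
  have image_norm_smul (s : Set ℂ) :
      (fun z : ℂ => ‖z‖) '' ((c : ℂ) • s) = |c| • (fun z : ℂ => ‖z‖) '' s := by
    simp only [← Set.image_smul, Set.image_image, norm_mul, Complex.norm_real, Real.norm_eq_abs,
      smul_eq_mul]
  rw [specRad, specRad, map_smul, spectrum.unit_smul_eq_smul, Units.smul_mk0, image_norm_smul,
    Real.sSup_smul_of_nonneg (abs_nonneg c), smul_eq_mul]

theorem spectralRadius_map_le_ofReal_specRad (A : Matrix ι ι ℝ) :
    spectralRadius ℂ (A.map (algebraMap ℝ ℂ)) ≤ ENNReal.ofReal (specRad A) :=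
  iSup₂_le fun z hz => by
    rw [← enorm_eq_nnnorm, ← ofReal_norm]
    exact ENNReal.ofReal_le_ofReal (norm_le_specRad hz)

theorem isTopologicallyNilpotent_of_specRad_lt_one {A : Matrix ι ι ℝ} (hA : specRad A < 1) :
    IsTopologicallyNilpotent A := by
  -- The topology of this norm is definitionally the entrywise one.
  let _ : NormedRing (Matrix ι ι ℂ) := Matrix.linftyOpNormedRing
  let _ : NormedAlgebra ℂ (Matrix ι ι ℂ) := Matrix.linftyOpNormedAlgebra
  have complex_nilpotent : IsTopologicallyNilpotent (A.map (algebraMap ℝ ℂ)) :=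
    isTopologicallyNilpotent_of_spectralRadius_lt_one <|
      (spectralRadius_map_le_ofReal_specRad A).trans_lt (ENNReal.ofReal_lt_one.mpr hA)
  have re_pow (n : ℕ) : ((A.map (algebraMap ℝ ℂ)) ^ n).map Complex.re = A ^ n := by
    rw [← Matrix.map_pow, Matrix.map_map]
    exact Matrix.map_id' _
  have re_continuous : Continuous fun M : Matrix ι ι ℂ => M.map Complex.re :=
    continuous_id.matrix_map Complex.continuous_re
  simpa only [IsTopologicallyNilpotent, Function.comp_def, re_pow,
    Matrix.map_zero _ Complex.zero_re] using (re_continuous.tendsto 0).comp complex_nilpotent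

section GeomSum

variable {R : Type*} {B : Matrix ι ι R} {v : ι → R}

theorem eventually_pow_mulVec_le [Semiring R] [LinearOrder R] [TopologicalSpace R]
    [OrderTopology R] [IsTopologicalSemiring R] (hB : IsTopologicallyNilpotent B)
    (hv : ∀ i, 0 < v i) : ∀ᶠ n : ℕ in atTop, B ^ n *ᵥ v ≤ v := by
  have mulVec_continuous : Continuous fun M : Matrix ι ι R => M *ᵥ v :=
    continuous_id.matrix_mulVec continuous_const
  have pow_mulVec_tendsto : Tendsto (fun n : ℕ => B ^ n *ᵥ v) atTop (𝓝 0) := by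
    simpa [Function.comp_def] using (mulVec_continuous.tendsto 0).comp hB
  exact eventually_all.mpr fun i =>
    (tendsto_pi_nhds.mp pow_mulVec_tendsto i).eventually_le_const (hv i)

theorem mulVec_geom_sum_mulVec_le_iff [Ring R] [PartialOrder R] [IsOrderedAddMonoid R]
    (B : Matrix ι ι R) (v : ι → R) (n : ℕ) :
    B *ᵥ (∑ m ∈ range n, B ^ m) *ᵥ v ≤ (∑ m ∈ range n, B ^ m) *ᵥ v ↔ B ^ n *ᵥ v ≤ v := by
  have telescope : (∑ m ∈ range n, B ^ m) *ᵥ v - B *ᵥ (∑ m ∈ range n, B ^ m) *ᵥ v =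
      v - B ^ n *ᵥ v := by
    simpa only [sub_mul, one_mul, sub_mulVec, one_mulVec, mulVec_mulVec] using
      congrArg (· *ᵥ v) (mul_neg_geom_sum B n)
  rw [← sub_nonneg, telescope, sub_nonneg]

theorem geom_sum_mulVec_pos [Semiring R] [PartialOrder R] [IsOrderedRing R]
    (hB : ∀ i j, 0 ≤ B i j) (hv : ∀ i, 0 < v i) {n : ℕ} (hn : n ≠ 0) (i : ι) :
    0 < ((∑ m ∈ range n, B ^ m) *ᵥ v) i := by
  have pow_mulVec_nonneg (m : ℕ) : 0 ≤ (B ^ m *ᵥ v) i :=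
    dotProduct_nonneg_of_nonneg (pow_apply_nonneg hB m i) fun j => (hv j).le
  calc
    0 < (B ^ 0 *ᵥ v) i := by simpa using hv i
    _ ≤ ∑ m ∈ range n, (B ^ m *ᵥ v) i :=
      single_le_sum (f := fun m => (B ^ m *ᵥ v) i) (fun m _ => pow_mulVec_nonneg m)
        (mem_range.mpr (Nat.pos_of_ne_zero hn))
    _ = ((∑ m ∈ range n, B ^ m) *ᵥ v) i := by rw [sum_mulVec, Finset.sum_apply]

end GeomSum

theorem suitable_vector_partial_sum_general (A : Matrix ι ι ℝ) (σ : ℝ) (hA : ∀ i j, 0 ≤ A i j)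
    (hσ : specRad A < σ) {v : ι → ℝ} (hv : ∀ i, 0 < v i) :
    ∀ᶠ k : ℕ in atTop, IsSuitable_s7 A σ (∑ m ∈ range (k + 1), (σ ^ m)⁻¹ • A ^ m *ᵥ v) := by
  have σ_pos : 0 < σ := (specRad_nonneg A).trans_lt hσ
  have scaled_nonneg (i j : ι) : 0 ≤ (σ⁻¹ • A) i j :=
    mul_nonneg (inv_nonneg.mpr σ_pos.le) (hA i j)
  have scaled_specRad_lt_one : specRad (σ⁻¹ • A) < 1 := by
    rwa [specRad_smul (inv_ne_zero σ_pos.ne'), abs_of_pos (inv_pos.mpr σ_pos),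
      inv_mul_lt_one₀ σ_pos]
  have partial_sum_eq (k : ℕ) : ∑ m ∈ range (k + 1), (σ ^ m)⁻¹ • A ^ m *ᵥ v =
      (∑ m ∈ range (k + 1), (σ⁻¹ • A) ^ m) *ᵥ v := by
    simp only [sum_mulVec, smul_pow, inv_pow, smul_mulVec]
  have eventually_le := (tendsto_add_atTop_nat 1).eventually <|
    eventually_pow_mulVec_le (isTopologicallyNilpotent_of_specRad_lt_one scaled_specRad_lt_one) hv
  filter_upwards [eventually_le] with k hk
  rw [partial_sum_eq]
  exact ⟨geom_sum_mulVec_pos scaled_nonneg hv k.succ_ne_zero,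
    (inv_smul_mulVec_le_iff σ_pos).mp ((mulVec_geom_sum_mulVec_le_iff _ v (k + 1)).mpr hk)⟩

end PartialSums

theorem suitable_vector_partial_sum
    {ι : Type*} [Fintype ι] [Nonempty ι] [DecidableEq ι]
    (A : Matrix ι ι ℝ) (σ : ℝ)
    (hA : ∀ i j, 0 ≤ A i j)
    (hσ : specRad A < σ) :
    ∃ k : ℕ,
      (∀ i, A.mulVec (∑ m ∈ Finset.range (k + 1),
          (σ ^ m)⁻¹ • (A ^ m).mulVec (fun _ => (1 : ℝ))) i ≤
        σ * (∑ m ∈ Finset.range (k + 1),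
          (σ ^ m)⁻¹ • (A ^ m).mulVec (fun _ => (1 : ℝ))) i) ∧
      (∀ i, 0 < (∑ m ∈ Finset.range (k + 1),
          (σ ^ m)⁻¹ • (A ^ m).mulVec (fun _ => (1 : ℝ))) i) :=
  have ⟨k, suitable⟩ :=
    (suitable_vector_partial_sum_general A σ hA hσ fun _ => one_pos).exists
  ⟨k, suitable.mulVec_le, suitable.pos⟩
end
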